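/- On an almost quaternion-Hermitian 4n-manifold, under a conformal change of metric g° = e^{2σ} g with σ a smooth function, the associated tensors transform as: ω_A° = e^{2σ} ω_A; dω_A° = e^{2σ}(2dσ ∧ ω_A + dω_A); A d*°ω_A° = A d*ω_A − 2(2n−1) dσ; A λ_A° = A λ_A − (1/n) dσ; β_I° = e^{2σ}(β_I + 2 J dσ ∧ ω_J + 2 K dσ ∧ ω_K) (and cyclically); ν^A_3° = ν^A_3 − 4dσ; ν^A_4° = ν^A_4 − 4dσ; θ^{ξ°} = θ^ξ − (1/4) dσ; θ^{ξ°}_A = θ^ξ_A − (1/4) dσ. In particular, the only Sp(n)Sp(1)-component of the intrinsic torsion that changes under the conformal rescaling is ξ_{EH}. -/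

import Mathlib

/-!  Synthetic (Koszul-style) model of an almost quaternion-Hermitian `4n`-manifold.

`C` plays the role of the commutative ℝ-algebra of smooth functions and `V` that of
the `C`-module of vector fields, equipped with a directional derivative `D`, a Lie
bracket, a Riemannian metric `g` together with its Levi-Civita connection `nab`
(characterised by being torsion-free and metric), a local adapted basis `I, J, K`
of anticommuting almost complex structures with `K = I J`, each compatible with the
metric, and a (local) orthonormal frame.  -/

noncomputable section

open scoped BigOperators

structure AQH (n : ℕ) (C : Type*) (V : Type*) [CommRing C] [Algebra ℝ C]
    [AddCommGroup V] [Module C V] where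
  /-- derivative of a function along a vector field -/
  D : V → C → C
  D_add : ∀ X f g, D X (f + g) = D X f + D X g
  D_mul : ∀ X f g, D X (f * g) = f * D X g + g * D X f
  D_const : ∀ X (r : ℝ), D X (algebraMap ℝ C r) = 0
  D_addX : ∀ X Y f, D (X + Y) f = D X f + D Y f
  D_smulX : ∀ (f : C) (X : V) (h : C), D (f • X) h = f * D X h
  /-- the Lie bracket of vector fields -/
  bracket : V → V → V
  bracket_skew : ∀ X Y, bracket X Y = -bracket Y X
  bracket_add : ∀ X Y Z, bracket X (Y + Z) = bracket X Y + bracket X Z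
  bracket_smul : ∀ X (f : C) Y, bracket X (f • Y) = f • bracket X Y + (D X f) • Y
  bracket_jacobi : ∀ X Y Z,
    bracket X (bracket Y Z) + bracket Y (bracket Z X) + bracket Z (bracket X Y) = 0
  D_bracket : ∀ X Y f, D (bracket X Y) f = D X (D Y f) - D Y (D X f)
  /-- the Riemannian metric -/
  g : V → V → C
  g_symm : ∀ X Y, g X Y = g Y X
  g_add : ∀ X Y Z, g (X + Y) Z = g X Z + g Y Z
  g_smul : ∀ (f : C) X Y, g (f • X) Y = f * g X Y
  /-- the Levi-Civita connection -/
  nab : V → V → V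
  nab_addX : ∀ X Y Z, nab (X + Y) Z = nab X Z + nab Y Z
  nab_smulX : ∀ (f : C) X Y, nab (f • X) Y = f • nab X Y
  nab_add : ∀ X Y Z, nab X (Y + Z) = nab X Y + nab X Z
  nab_leibniz : ∀ X (f : C) Y, nab X (f • Y) = f • nab X Y + (D X f) • Y
  torsion_free : ∀ X Y, nab X Y - nab Y X = bracket X Y
  nab_metric : ∀ X Y Z, D X (g Y Z) = g (nab X Y) Z + g Y (nab X Z)
  /-- the (local) adapted basis of almost complex structures -/
  I : V → V
  J : V → V
  K : V → V
  I_lin : ∀ (f : C) X Y, I (f • X + Y) = f • I X + I Y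
  J_lin : ∀ (f : C) X Y, J (f • X + Y) = f • J X + J Y
  K_lin : ∀ (f : C) X Y, K (f • X + Y) = f • K X + K Y
  I_sq : ∀ X, I (I X) = -X
  J_sq : ∀ X, J (J X) = -X
  K_def : ∀ X, K X = I (J X)
  anticomm : ∀ X, I (J X) = -J (I X)
  I_metric : ∀ X Y, g (I X) (I Y) = g X Y
  J_metric : ∀ X Y, g (J X) (J Y) = g X Y
  /-- a (local) orthonormal frame -/
  frame : Fin (4 * n) → V
  frame_orthonormal : ∀ i j, g (frame i) (frame j) = if i = j then 1 else 0
  frame_span : ∀ X, X = ∑ i, g X (frame i) • frame i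

namespace AQH

section ops

variable {C V : Type*} [CommRing C]

/-- the operator `A_(1)` on covariant 3-tensors -/
def op1 (A : V → V) (ψ : V → V → V → C) : V → V → V → C := fun X Y Z => -ψ (A X) Y Z

/-- the operator `A_(2)` on covariant 3-tensors -/
def op2 (A : V → V) (ψ : V → V → V → C) : V → V → V → C := fun X Y Z => -ψ X (A Y) Z

/-- the operator `A_(3)` on covariant 3-tensors -/
def op3 (A : V → V) (ψ : V → V → V → C) : V → V → V → C := fun X Y Z => -ψ X Y (A Z)

/-- the operator `A_(12) = A_(1) A_(2)` on covariant 3-tensors -/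
def op12 (A : V → V) (ψ : V → V → V → C) : V → V → V → C := fun X Y Z => ψ (A X) (A Y) Z

/-- the operator `A_(13) = A_(1) A_(3)` on covariant 3-tensors -/
def op13 (A : V → V) (ψ : V → V → V → C) : V → V → V → C := fun X Y Z => ψ (A X) Y (A Z)

/-- the operator `A_(23) = A_(2) A_(3)` on covariant 3-tensors -/
def op23 (A : V → V) (ψ : V → V → V → C) : V → V → V → C := fun X Y Z => ψ X (A Y) (A Z)

/-- the operator `𝓛_A = A_(12) + A_(13) + A_(23)` on three-forms -/
def calL (A : V → V) (ψ : V → V → V → C) : V → V → V → C :=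
  fun X Y Z => op12 A ψ X Y Z + op13 A ψ X Y Z + op23 A ψ X Y Z

/-- the action `(A ν)(X) = -ν (A X)` of `A` on a one-form -/
def act1 (A : V → V) (ν : V → C) : V → C := fun X => -ν (A X)

/-- the action `(A ψ)(X,Y,Z) = -ψ(AX,AY,AZ)` of `A` on a three-form -/
def act3 (A : V → V) (ψ : V → V → V → C) : V → V → V → C :=
  fun X Y Z => -ψ (A X) (A Y) (A Z)

/-- wedge product of two one-forms -/
def wedge11 (α β : V → C) : V → V → C := fun X Y => α X * β Y - α Y * β X

/-- wedge product of a one-form and a two-form -/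
def wedge12 (ν : V → C) (ω : V → V → C) : V → V → V → C :=
  fun X Y Z => ν X * ω Y Z - ν Y * ω X Z + ν Z * ω X Y

/-- wedge product of two two-forms -/
def wedge22 (α β : V → V → C) : V → V → V → V → C := fun X Y Z W =>
  α X Y * β Z W - α X Z * β Y W + α X W * β Y Z
    + α Z W * β X Y - α Y W * β X Z + α Y Z * β X W

/-- a (0,3)-tensor is an alternating three-form -/
def IsAlt3 (T : V → V → V → C) : Prop :=
  (∀ X Y Z, T Y X Z = -T X Y Z) ∧ (∀ X Y Z, T X Z Y = -T X Y Z)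

variable [AddCommGroup V] [Module C V]

/-- `C`-linearity (tensoriality) of a three-form in its first argument -/
def Lin3 (T : V → V → V → C) : Prop :=
  ∀ (f : C) X X' Y Z, T (f • X + X') Y Z = f * T X Y Z + T X' Y Z

/-- `C`-linearity (tensoriality) of a one-form -/
def Lin1 (ν : V → C) : Prop := ∀ (f : C) X X', ν (f • X + X') = f * ν X + ν X'

end ops

section derived

variable {n : ℕ} {C V : Type*} [CommRing C] [Algebra ℝ C] [AddCommGroup V] [Module C V]
  [Module ℝ V] [IsScalarTower ℝ C V]

variable (M : AQH n C V)

/-- the Kähler form `ω_A(X,Y) = g(X, A Y)` -/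
def omega (A : V → V) : V → V → C := fun X Y => M.g X (A Y)

/-- `(∇_X A) Y` -/
def nabA (A : V → V) : V → V → V := fun X Y => M.nab X (A Y) - A (M.nab X Y)

/-- covariant derivative of a 2-form: `(∇_X ψ)(Y,Z)` -/
def nab2 (ψ : V → V → C) : V → V → V → C :=
  fun X Y Z => M.D X (ψ Y Z) - ψ (M.nab X Y) Z - ψ Y (M.nab X Z)

/-- covariant derivative of a 4-form -/
def nab4 (ψ : V → V → V → V → C) : V → V → V → V → V → C :=
  fun X Y Z W U => M.D X (ψ Y Z W U) - ψ (M.nab X Y) Z W U - ψ Y (M.nab X Z) W U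
    - ψ Y Z (M.nab X W) U - ψ Y Z W (M.nab X U)

/-- exterior derivative of a one-form -/
def d1 (ν : V → C) : V → V → C :=
  fun X Y => M.D X (ν Y) - M.D Y (ν X) - ν (M.bracket X Y)

/-- exterior derivative of a two-form -/
def d2 (ψ : V → V → C) : V → V → V → C :=
  fun X Y Z => M.D X (ψ Y Z) - M.D Y (ψ X Z) + M.D Z (ψ X Y)
    - ψ (M.bracket X Y) Z + ψ (M.bracket X Z) Y - ψ (M.bracket Y Z) X

/-- exterior derivative of a four-form -/
def d4 (ψ : V → V → V → V → C) : V → V → V → V → V → C := fun X Y Z W U =>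
  M.D X (ψ Y Z W U) - M.D Y (ψ X Z W U) + M.D Z (ψ X Y W U) - M.D W (ψ X Y Z U)
      + M.D U (ψ X Y Z W)
    - ψ (M.bracket X Y) Z W U + ψ (M.bracket X Z) Y W U - ψ (M.bracket X W) Y Z U
      + ψ (M.bracket X U) Y Z W
    - ψ (M.bracket Y Z) X W U + ψ (M.bracket Y W) X Z U - ψ (M.bracket Y U) X Z W
    - ψ (M.bracket Z W) X Y U + ψ (M.bracket Z U) X Y W
    - ψ (M.bracket W U) X Y Z

/-- the Nijenhuis tensor `N_A(X,Y)` -/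
def nijV (A : V → V) : V → V → V := fun X Y =>
  M.bracket X Y + A (M.bracket (A X) Y) + A (M.bracket X (A Y)) - M.bracket (A X) (A Y)

/-- the Nijenhuis `(0,3)`-tensor `N_A(X,Y,Z) = g(X, N_A(Y,Z))` -/
def nij3 (A : V → V) : V → V → V → C := fun X Y Z => M.g X (M.nijV A Y Z)

/-- the induced inner product of two 2-forms,
`⟨ψ,φ⟩ = (1/2!) ψ(e_i,e_j) φ(e_i,e_j)` -/
def inner2 (ψ φ : V → V → C) : C :=
  (1/2 : ℝ) • ∑ i, ∑ j, ψ (M.frame i) (M.frame j) * φ (M.frame i) (M.frame j)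

/-- the contraction `(Λ_A β)(X) = ⟨X ⌟ β, ω_A⟩` of a three-form -/
def Lam (A : V → V) (β : V → V → V → C) : V → C :=
  fun X => (1/2 : ℝ) •
    ∑ i, ∑ j, β X (M.frame i) (M.frame j) * M.omega A (M.frame i) (M.frame j)

/-- `λ_I(X) = (1/2n) ⟨∇_X ω_J, ω_K⟩` -/
def lambdaI : V → C := fun X =>
  (1/(2*(n:ℝ))) • M.inner2 (fun Y Z => M.nab2 (M.omega M.J) X Y Z) (M.omega M.K)

/-- `λ_J(X) = (1/2n) ⟨∇_X ω_K, ω_I⟩` -/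
def lambdaJ : V → C := fun X =>
  (1/(2*(n:ℝ))) • M.inner2 (fun Y Z => M.nab2 (M.omega M.K) X Y Z) (M.omega M.I)

/-- `λ_K(X) = (1/2n) ⟨∇_X ω_I, ω_J⟩` -/
def lambdaK : V → C := fun X =>
  (1/(2*(n:ℝ))) • M.inner2 (fun Y Z => M.nab2 (M.omega M.I) X Y Z) (M.omega M.J)

/-- codifferential of a two-form -/
def codiff2 (ψ : V → V → C) : V → C := fun Z => -∑ i, M.nab2 ψ (M.frame i) (M.frame i) Z

/-- codifferential of a four-form -/
def codiff4 (ψ : V → V → V → V → C) : V → V → V → C :=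
  fun X Y Z => -∑ i, M.nab4 ψ (M.frame i) (M.frame i) X Y Z

/-- `β_I = J dω_J + K dω_K` -/
def betaI : V → V → V → C := fun X Y Z =>
  act3 M.J (M.d2 (M.omega M.J)) X Y Z + act3 M.K (M.d2 (M.omega M.K)) X Y Z

/-- `β_J = K dω_K + I dω_I` -/
def betaJ : V → V → V → C := fun X Y Z =>
  act3 M.K (M.d2 (M.omega M.K)) X Y Z + act3 M.I (M.d2 (M.omega M.I)) X Y Z

/-- `β_K = I dω_I + J dω_J` -/
def betaK : V → V → V → C := fun X Y Z =>
  act3 M.I (M.d2 (M.omega M.I)) X Y Z + act3 M.J (M.d2 (M.omega M.J)) X Y Z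

/-- the intrinsic torsion
`ξ_X Y = -(1/4) Σ_A A (∇_X A) Y + (1/2) Σ_A λ_A(X) A Y` -/
def xi : V → V → V := fun X Y =>
  (-(1/4 : ℝ)) • (M.I (M.nabA M.I X Y) + M.J (M.nabA M.J X Y) + M.K (M.nabA M.K X Y))
    + (1/2 : ℝ) • (M.lambdaI X • M.I Y + M.lambdaJ X • M.J Y + M.lambdaK X • M.K Y)

/-- the one-form `ν^I_4 = I Λ_I β_I` -/
def nu4I : V → C := act1 M.I (M.Lam M.I M.betaI)

/-- the one-form `ν^J_4 = J Λ_J β_J` -/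
def nu4J : V → C := act1 M.J (M.Lam M.J M.betaJ)

/-- the one-form `ν^K_4 = K Λ_K β_K` -/
def nu4K : V → C := act1 M.K (M.Lam M.K M.betaK)

/-- `ν^I_3`, determined by `J Λ_J β_I = (1/(2n-1)) (ν^I_4 + (2n+1)(n-1) ν^I_3)` -/
def nu3I : V → C := fun X =>
  (1/((2*(n:ℝ)+1) * ((n:ℝ)-1))) •
    ((2*(n:ℝ)-1) • act1 M.J (M.Lam M.J M.betaI) X - M.nu4I X)

/-- `ν^J_3`, determined by `K Λ_K β_J = (1/(2n-1)) (ν^J_4 + (2n+1)(n-1) ν^J_3)` -/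
def nu3J : V → C := fun X =>
  (1/((2*(n:ℝ)+1) * ((n:ℝ)-1))) •
    ((2*(n:ℝ)-1) • act1 M.K (M.Lam M.K M.betaJ) X - M.nu4J X)

/-- `ν^K_3`, determined by `I Λ_I β_K = (1/(2n-1)) (ν^K_4 + (2n+1)(n-1) ν^K_3)` -/
def nu3K : V → C := fun X =>
  (1/((2*(n:ℝ)+1) * ((n:ℝ)-1))) •
    ((2*(n:ℝ)-1) • act1 M.I (M.Lam M.I M.betaK) X - M.nu4K X)

/-- `β^{(E)}_{3I} = -(1/2) Jν^I_3 ∧ ω_J - (1/2) Kν^I_3 ∧ ω_K + (1/(2n-1)) Iν^I_3 ∧ ω_I` -/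
def betaE3I : V → V → V → C := fun X Y Z =>
  (-(1/2:ℝ)) • wedge12 (act1 M.J M.nu3I) (M.omega M.J) X Y Z
    + (-(1/2:ℝ)) • wedge12 (act1 M.K M.nu3I) (M.omega M.K) X Y Z
    + (1/(2*(n:ℝ)-1)) • wedge12 (act1 M.I M.nu3I) (M.omega M.I) X Y Z

def betaE3J : V → V → V → C := fun X Y Z =>
  (-(1/2:ℝ)) • wedge12 (act1 M.K M.nu3J) (M.omega M.K) X Y Z
    + (-(1/2:ℝ)) • wedge12 (act1 M.I M.nu3J) (M.omega M.I) X Y Z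
    + (1/(2*(n:ℝ)-1)) • wedge12 (act1 M.J M.nu3J) (M.omega M.J) X Y Z

def betaE3K : V → V → V → C := fun X Y Z =>
  (-(1/2:ℝ)) • wedge12 (act1 M.I M.nu3K) (M.omega M.I) X Y Z
    + (-(1/2:ℝ)) • wedge12 (act1 M.J M.nu3K) (M.omega M.J) X Y Z
    + (1/(2*(n:ℝ)-1)) • wedge12 (act1 M.K M.nu3K) (M.omega M.K) X Y Z

/-- `β_{4I} = -(1/(2n-1)) Iν^I_4 ∧ ω_I` -/
def beta4I : V → V → V → C := fun X Y Z =>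
  (-(1/(2*(n:ℝ)-1))) • wedge12 (act1 M.I M.nu4I) (M.omega M.I) X Y Z

def beta4J : V → V → V → C := fun X Y Z =>
  (-(1/(2*(n:ℝ)-1))) • wedge12 (act1 M.J M.nu4J) (M.omega M.J) X Y Z

def beta4K : V → V → V → C := fun X Y Z =>
  (-(1/(2*(n:ℝ)-1))) • wedge12 (act1 M.K M.nu4K) (M.omega M.K) X Y Z

/-- `β_I^{(3+K)} = β_I - β^{(E)}_{3I} - β_{4I}` -/
def beta3KI : V → V → V → C := fun X Y Z => M.betaI X Y Z - M.betaE3I X Y Z - M.beta4I X Y Z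

def beta3KJ : V → V → V → C := fun X Y Z => M.betaJ X Y Z - M.betaE3J X Y Z - M.beta4J X Y Z

def beta3KK : V → V → V → C := fun X Y Z => M.betaK X Y Z - M.betaE3K X Y Z - M.beta4K X Y Z

/-- `β_I^{(3)} = (1/6) (2 - 𝓛_J - 𝓛_K) β_I^{(3+K)}` -/
def beta3I : V → V → V → C := fun X Y Z =>
  (1/6:ℝ) • ((2:ℝ) • M.beta3KI X Y Z - calL M.J M.beta3KI X Y Z - calL M.K M.beta3KI X Y Z)

def beta3J : V → V → V → C := fun X Y Z =>
  (1/6:ℝ) • ((2:ℝ) • M.beta3KJ X Y Z - calL M.K M.beta3KJ X Y Z - calL M.I M.beta3KJ X Y Z)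

def beta3K : V → V → V → C := fun X Y Z =>
  (1/6:ℝ) • ((2:ℝ) • M.beta3KK X Y Z - calL M.I M.beta3KK X Y Z - calL M.J M.beta3KK X Y Z)

/-- `β_I^{(K)} = (1/6) (4 + 𝓛_J + 𝓛_K) β_I^{(3+K)}` -/
def betaKI : V → V → V → C := fun X Y Z =>
  (1/6:ℝ) • ((4:ℝ) • M.beta3KI X Y Z + calL M.J M.beta3KI X Y Z + calL M.K M.beta3KI X Y Z)

def betaKJ : V → V → V → C := fun X Y Z =>
  (1/6:ℝ) • ((4:ℝ) • M.beta3KJ X Y Z + calL M.K M.beta3KJ X Y Z + calL M.I M.beta3KJ X Y Z)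

def betaKK : V → V → V → C := fun X Y Z =>
  (1/6:ℝ) • ((4:ℝ) • M.beta3KK X Y Z + calL M.I M.beta3KK X Y Z + calL M.J M.beta3KK X Y Z)

/-- the three-form `ψ^{(3)} = (1/12)(β_I^{(3)} + β_J^{(3)} + β_K^{(3)})` determining `ξ_{33}` -/
def psi3 : V → V → V → C := fun X Y Z =>
  (1/12:ℝ) • (M.beta3I X Y Z + M.beta3J X Y Z + M.beta3K X Y Z)

/-- the three-form `ψ^{(K)} = -(1/48)(β_I^{(K)} + β_J^{(K)} + β_K^{(K)})` determining `ξ_{KH}` -/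
def psiK : V → V → V → C := fun X Y Z =>
  (-(1/48:ℝ)) • (M.betaKI X Y Z + M.betaKJ X Y Z + M.betaKK X Y Z)

/-- the three-form `ψ^{(3)}_I` determining `ξ_{3H}` -/
def psi3I : V → V → V → C := fun X Y Z =>
  (-(1/8:ℝ)) • M.beta3I X Y Z
    + (1/48:ℝ) • ((3:ℝ) • (M.beta3I X Y Z + M.beta3J X Y Z + M.beta3K X Y Z)
        + calL M.I (fun a b c => M.beta3I a b c + M.beta3J a b c + M.beta3K a b c) X Y Z)

def psi3J : V → V → V → C := fun X Y Z =>
  (-(1/8:ℝ)) • M.beta3J X Y Z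
    + (1/48:ℝ) • ((3:ℝ) • (M.beta3I X Y Z + M.beta3J X Y Z + M.beta3K X Y Z)
        + calL M.J (fun a b c => M.beta3I a b c + M.beta3J a b c + M.beta3K a b c) X Y Z)

def psi3K : V → V → V → C := fun X Y Z =>
  (-(1/8:ℝ)) • M.beta3K X Y Z
    + (1/48:ℝ) • ((3:ℝ) • (M.beta3I X Y Z + M.beta3J X Y Z + M.beta3K X Y Z)
        + calL M.K (fun a b c => M.beta3I a b c + M.beta3J a b c + M.beta3K a b c) X Y Z)

/-- the three-form `ψ^{(K)}_I` determining `ξ_{K3}` -/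
def psiKI : V → V → V → C := fun X Y Z =>
  (-(1/2:ℝ)) • M.betaKI X Y Z
    + (1/6:ℝ) • (M.betaKI X Y Z + M.betaKJ X Y Z + M.betaKK X Y Z)

def psiKJ : V → V → V → C := fun X Y Z =>
  (-(1/2:ℝ)) • M.betaKJ X Y Z
    + (1/6:ℝ) • (M.betaKI X Y Z + M.betaKJ X Y Z + M.betaKK X Y Z)

def psiKK : V → V → V → C := fun X Y Z =>
  (-(1/2:ℝ)) • M.betaKK X Y Z
    + (1/6:ℝ) • (M.betaKI X Y Z + M.betaKJ X Y Z + M.betaKK X Y Z)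

/-- the one-form `θ^ξ` determining `ξ_{EH}`,
defined by `(6/n)(2n+1)(n-1) θ^ξ(X) = -⟨ξ_{e_i} e_i, X⟩` -/
def thetaXi : V → C := fun X =>
  (-((n:ℝ)/(6*(2*(n:ℝ)+1)*((n:ℝ)-1)))) • ∑ i, M.g (M.xi (M.frame i) (M.frame i)) X

/-- the local one-form `θ^ξ_I`, defined by `(2/n)(2n+1)(n-1) θ^ξ_I(X) = -⟨I ξ_{e_i} I e_i, X⟩` -/
def thetaXiI : V → C := fun X =>
  (-((n:ℝ)/(2*(2*(n:ℝ)+1)*((n:ℝ)-1)))) •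
    ∑ i, M.g (M.I (M.xi (M.frame i) (M.I (M.frame i)))) X

def thetaXiJ : V → C := fun X =>
  (-((n:ℝ)/(2*(2*(n:ℝ)+1)*((n:ℝ)-1)))) •
    ∑ i, M.g (M.J (M.xi (M.frame i) (M.J (M.frame i)))) X

def thetaXiK : V → C := fun X =>
  (-((n:ℝ)/(2*(2*(n:ℝ)+1)*((n:ℝ)-1)))) •
    ∑ i, M.g (M.K (M.xi (M.frame i) (M.K (M.frame i)))) X

/-- `α_I = -λ_I ⊗ g + (1/2)(J_(2) - J_(3)) ∇ω_K` -/
def alphaI : V → V → V → C := fun X Y Z =>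
  -(M.lambdaI X * M.g Y Z)
    + (1/2:ℝ) • (-(M.nab2 (M.omega M.K) X (M.J Y) Z) + M.nab2 (M.omega M.K) X Y (M.J Z))

def alphaJ : V → V → V → C := fun X Y Z =>
  -(M.lambdaJ X * M.g Y Z)
    + (1/2:ℝ) • (-(M.nab2 (M.omega M.I) X (M.K Y) Z) + M.nab2 (M.omega M.I) X Y (M.K Z))

def alphaK : V → V → V → C := fun X Y Z =>
  -(M.lambdaK X * M.g Y Z)
    + (1/2:ℝ) • (-(M.nab2 (M.omega M.J) X (M.I Y) Z) + M.nab2 (M.omega M.J) X Y (M.I Z))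

/-- the one-form `η_I(X) = α_I(e_i; e_i, X)` -/
def etaI : V → C := fun X => ∑ i, M.alphaI (M.frame i) (M.frame i) X

def etaJ : V → C := fun X => ∑ i, M.alphaJ (M.frame i) (M.frame i) X

def etaK : V → C := fun X => ∑ i, M.alphaK (M.frame i) (M.frame i) X

/-- the fundamental four-form `Ω = Σ_A ω_A ∧ ω_A` -/
def Omega4 : V → V → V → V → C := fun X Y Z W =>
  wedge22 (M.omega M.I) (M.omega M.I) X Y Z W
    + wedge22 (M.omega M.J) (M.omega M.J) X Y Z W
    + wedge22 (M.omega M.K) (M.omega M.K) X Y Z W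

/-- the one-form `θ^{d*Ω} = (1/3) Σ_A A Λ_A d*Ω` -/
def thetaDOmega : V → C := fun X =>
  (1/3:ℝ) • (act1 M.I (M.Lam M.I (M.codiff4 M.Omega4)) X
    + act1 M.J (M.Lam M.J (M.codiff4 M.Omega4)) X
    + act1 M.K (M.Lam M.K (M.codiff4 M.Omega4)) X)

/-- the vector-valued torsion: `g(W, T(X,Y)) = T(W,X,Y)` -/
def Tvec (T : V → V → V → C) : V → V → V := fun X Y => ∑ i, T (M.frame i) X Y • M.frame i

/-- the connection `∇ + (1/2) T` associated to a torsion (0,3)-tensor `T` -/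
def nabT (T : V → V → V → C) : V → V → V := fun X Y => M.nab X Y + (1/2:ℝ) • M.Tvec T X Y

/-- a connection is metric -/
def MetricConn (nab' : V → V → V) : Prop :=
  ∀ X Y Z, M.D X (M.g Y Z) = M.g (nab' X Y) Z + M.g Y (nab' X Z)

/-- a connection is quaternionic, with associated local one-forms `γ_I, γ_J, γ_K`:
`∇'_X I = γ_K(X) J - γ_J(X) K`, and cyclically -/
def QuatConn (nab' : V → V → V) (γI γJ γK : V → C) : Prop :=
  (∀ X Y, nab' X (M.I Y) - M.I (nab' X Y) = γK X • M.J Y - γJ X • M.K Y) ∧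
  (∀ X Y, nab' X (M.J Y) - M.J (nab' X Y) = γI X • M.K Y - γK X • M.I Y) ∧
  (∀ X Y, nab' X (M.K Y) - M.K (nab' X Y) = γJ X • M.I Y - γI X • M.J Y)

/-- the HKT condition: `I, J, K` integrable and there is a metric connection
`∇ + (1/2)T` with totally skew torsion making `I, J, K` parallel -/
def IsHKT : Prop :=
  (∀ X Y, M.nijV M.I X Y = 0) ∧ (∀ X Y, M.nijV M.J X Y = 0) ∧
  (∀ X Y, M.nijV M.K X Y = 0) ∧
  ∃ T : V → V → V → C, IsAlt3 T ∧ Lin3 T ∧ M.MetricConn (M.nabT T) ∧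
    (∀ X Y, M.nabT T X (M.I Y) = M.I (M.nabT T X Y)) ∧
    (∀ X Y, M.nabT T X (M.J Y) = M.J (M.nabT T X Y)) ∧
    (∀ X Y, M.nabT T X (M.K Y) = M.K (M.nabT T X Y))

/-- membership of a three-form in `KH`: type `{2,1}` for each `A` and `Λ_A ψ = 0` -/
def InKH3 (ψ : V → V → V → C) : Prop :=
  IsAlt3 ψ ∧ Lin3 ψ ∧
  calL M.I ψ = ψ ∧ calL M.J ψ = ψ ∧ calL M.K ψ = ψ ∧
  M.Lam M.I ψ = 0 ∧ M.Lam M.J ψ = 0 ∧ M.Lam M.K ψ = 0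

/-- the `(0,3)`-tensor of the `KH`-component of the torsion determined by `ψ^{(K)}`:
`3ψ - Σ_A A_(23) ψ` -/
def xiKH3 (ψ : V → V → V → C) : V → V → V → C := fun X Y Z =>
  (3:ℝ) • ψ X Y Z - (op23 M.I ψ X Y Z + op23 M.J ψ X Y Z + op23 M.K ψ X Y Z)

/-- the `(0,3)`-tensor of the `EH`-component of the torsion determined by the
one-form `θ`: `3 e_i ⊗ e_i ∧ θ - Σ_A (e_i ⊗ A e_i ∧ A θ + (2/n) A θ ⊗ ω_A)` -/
def xiEH3 (θ : V → C) : V → V → V → C := fun X Y Z =>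
  (3:ℝ) • ∑ i, M.g (M.frame i) X *
      (M.g (M.frame i) Y * θ Z - M.g (M.frame i) Z * θ Y)
  - ((∑ i, M.g (M.frame i) X *
        (M.g (M.I (M.frame i)) Y * act1 M.I θ Z - M.g (M.I (M.frame i)) Z * act1 M.I θ Y))
    + (∑ i, M.g (M.frame i) X *
        (M.g (M.J (M.frame i)) Y * act1 M.J θ Z - M.g (M.J (M.frame i)) Z * act1 M.J θ Y))
    + (∑ i, M.g (M.frame i) X *
        (M.g (M.K (M.frame i)) Y * act1 M.K θ Z - M.g (M.K (M.frame i)) Z * act1 M.K θ Y)))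
  - (2/(n:ℝ)) • (act1 M.I θ X * M.omega M.I Y Z + act1 M.J θ X * M.omega M.J Y Z
      + act1 M.K θ X * M.omega M.K Y Z)

/-- the intrinsic torsion lies in `(K+E)H`: it is the sum of a `KH`-tensor and an
`EH`-tensor as described in §3 of the paper -/
def inKEH : Prop :=
  ∃ (ψ : V → V → V → C) (θ : V → C), M.InKH3 ψ ∧ Lin1 θ ∧
    ∀ X Y Z, M.g Y (M.xi X Z) = M.xiKH3 ψ X Y Z + M.xiEH3 θ X Y Z

end derived

end AQH


namespace AQH

section conf

variable {n : ℕ} {C V : Type*} [CommRing C] [Algebra ℝ C] [AddCommGroup V] [Module C V]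

theorem half_cancel {a b : C} (h : 2 * a = 2 * b) : a = b := by
  have h2 : (algebraMap ℝ C (1/2)) * 2 = 1 := by
    rw [← map_ofNat (algebraMap ℝ C) 2, ← map_mul]; norm_num
  linear_combination (algebraMap ℝ C (1/2)) * h - (a - b) * h2

/-- a `C`-linear, skew endomorphism squaring to `-1` -/
structure Herm (M : AQH n C V) (A : V → V) : Prop where
  add : ∀ X Y, A (X + Y) = A X + A Y
  smul : ∀ (f : C) X, A (f • X) = f • A X
  sq : ∀ X, A (A X) = -X
  skew : ∀ X Y, M.g (A X) Y = -M.g X (A Y)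

variable (M : AQH n C V)

theorem g_add' (X Y Z : V) : M.g X (Y + Z) = M.g X Y + M.g X Z := by
  rw [M.g_symm, M.g_add, M.g_symm Y, M.g_symm Z]

theorem g_smul' (f : C) (X Y : V) : M.g X (f • Y) = f * M.g X Y := by
  rw [M.g_symm, M.g_smul, M.g_symm Y]

theorem g_neg (X Y : V) : M.g (-X) Y = -M.g X Y := by
  have := M.g_smul (-1) X Y
  simpa using this

theorem g_neg' (X Y : V) : M.g X (-Y) = -M.g X Y := by
  have := M.g_smul' (-1) X Y
  simpa using this

theorem g_sub (X Y Z : V) : M.g (X - Y) Z = M.g X Z - M.g Y Z := by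
  rw [sub_eq_add_neg, M.g_add, M.g_neg, sub_eq_add_neg]

theorem g_sub' (X Y Z : V) : M.g X (Y - Z) = M.g X Y - M.g X Z := by
  rw [sub_eq_add_neg, M.g_add', M.g_neg', sub_eq_add_neg]

theorem g_lin (X : V) : IsLinearMap C (M.g X) := ⟨M.g_add' X, fun f => M.g_smul' f X⟩

theorem nab_neg (X Y : V) : M.nab X (-Y) = -M.nab X Y := by
  have h0 : M.nab X 0 = 0 := by
    have := M.nab_add X 0 0
    simpa using this
  have := M.nab_add X Y (-Y)
  rw [add_neg_cancel, h0] at this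
  exact (neg_eq_of_add_eq_zero_right this.symm).symm

theorem D_lin (σ : C) : IsLinearMap C (fun X => M.D X σ) :=
  ⟨fun X Y => M.D_addX X Y σ, fun f X => M.D_smulX f X σ⟩

theorem D_negX (X : V) (f : C) : M.D (-X) f = -M.D X f := (M.D_lin f).map_neg X

theorem lin_eval {ν : V → C} (hν : IsLinearMap C ν) (X : V) :
    ∑ i, M.g X (M.frame i) * ν (M.frame i) = ν X := by
  conv_rhs => rw [M.frame_span X]
  have : ν (∑ i, M.g X (M.frame i) • M.frame i)
      = ∑ i, hν.mk' ν (M.g X (M.frame i) • M.frame i) :=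
    map_sum (hν.mk' ν) _ _
  rw [this]
  refine Finset.sum_congr rfl fun i _ => ?_
  simp

theorem lin_eval' {ν : V → C} (hν : IsLinearMap C ν) (X : V) :
    ∑ i, ν (M.frame i) * M.g X (M.frame i) = ν X := by
  rw [← M.lin_eval hν X]
  exact Finset.sum_congr rfl fun i _ => mul_comm _ _

theorem parseval (X Y : V) : ∑ i, M.g X (M.frame i) * M.g Y (M.frame i) = M.g X Y := by
  rw [M.lin_eval (M.g_lin Y), M.g_symm]

theorem g_ext {X Y : V} (h : ∀ Z, M.g X Z = M.g Y Z) : X = Y := by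
  rw [M.frame_span X, M.frame_span Y]
  simp only [h]

/-- the gradient of `σ` -/
def grad (σ : C) : V := ∑ i, M.D (M.frame i) σ • M.frame i

theorem g_grad' (σ : C) (X : V) : M.g X (M.grad σ) = M.D X σ := by
  have : M.g X (M.grad σ) = ∑ i, (M.g_lin X).mk' _ (M.D (M.frame i) σ • M.frame i) :=
    map_sum ((M.g_lin X).mk' _) _ _
  rw [this, ← M.lin_eval' (M.D_lin σ) X]
  refine Finset.sum_congr rfl fun i _ => ?_
  simp

theorem g_grad (σ : C) (X : V) : M.g (M.grad σ) X = M.D X σ := by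
  rw [M.g_symm, M.g_grad']

theorem sum_gee : ∑ i, M.g (M.frame i) (M.frame i) = 4 * (n : C) := by
  simp [M.frame_orthonormal]

theorem hermI : M.Herm M.I where
  add X Y := by simpa using M.I_lin 1 X Y
  smul f X := by
    have h0 : M.I 0 = 0 := by simpa using M.I_lin 1 0 0
    simpa [h0] using M.I_lin f X 0
  sq := M.I_sq
  skew X Y := by rw [← M.I_metric X (M.I Y), M.I_sq, M.g_neg', neg_neg]

theorem hermJ : M.Herm M.J where
  add X Y := by simpa using M.J_lin 1 X Y
  smul f X := by
    have h0 : M.J 0 = 0 := by simpa using M.J_lin 1 0 0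
    simpa [h0] using M.J_lin f X 0
  sq := M.J_sq
  skew X Y := by rw [← M.J_metric X (M.J Y), M.J_sq, M.g_neg', neg_neg]

theorem Herm.neg {M : AQH n C V} {A : V → V} (h : M.Herm A) (X : V) : A (-X) = -A X := by
  simpa using h.smul (-1) X

theorem Herm.sub {M : AQH n C V} {A : V → V} (h : M.Herm A) (X Y : V) :
    A (X - Y) = A X - A Y := by
  rw [sub_eq_add_neg, h.add, h.neg, sub_eq_add_neg]

theorem Herm.metric {M : AQH n C V} {A : V → V} (h : M.Herm A) (X Y : V) :
    M.g (A X) (A Y) = M.g X Y := by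
  rw [h.skew, h.sq, M.g_neg', neg_neg]

theorem Herm.comp_lin {M : AQH n C V} {A : V → V} (h : M.Herm A) {ν : V → C}
    (hν : IsLinearMap C ν) : IsLinearMap C (fun X => ν (A X)) :=
  ⟨fun X Y => by rw [h.add, hν.map_add], fun f X => by rw [h.smul, hν.map_smul]⟩

theorem Herm.diag {M : AQH n C V} {A : V → V} (h : M.Herm A) (X : V) : M.g X (A X) = 0 := by
  apply half_cancel
  have := h.skew X X
  rw [M.g_symm] at this
  linear_combination this

theorem IJ (X : V) : M.I (M.J X) = M.K X := (M.K_def X).symm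
theorem JI (X : V) : M.J (M.I X) = -M.K X := by rw [M.K_def, M.anticomm, neg_neg]
theorem IK (X : V) : M.I (M.K X) = -M.J X := by rw [M.K_def, M.I_sq]
theorem KJ (X : V) : M.K (M.J X) = -M.I X := by rw [M.K_def, M.J_sq, M.hermI.neg]
theorem KI (X : V) : M.K (M.I X) = M.J X := by
  rw [M.K_def, M.JI, M.hermI.neg, M.IK, neg_neg]
theorem JK (X : V) : M.J (M.K X) = M.I X := by
  rw [M.K_def, M.anticomm, M.hermJ.neg, M.J_sq, neg_neg]

theorem hermK : M.Herm M.K where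
  add X Y := by simpa using M.K_lin 1 X Y
  smul f X := by
    have h0 : M.K 0 = 0 := by simpa using M.K_lin 1 0 0
    simpa [h0] using M.K_lin f X 0
  sq X := by rw [M.K_def, M.JK, M.I_sq]
  skew X Y := by
    rw [M.K_def, M.hermI.skew, M.hermJ.skew, M.JI, M.g_neg', neg_neg]

/-- the cyclic rotation `(I, J, K) ↦ (J, K, I)` -/
def rot : AQH n C V :=
  { M with
    I := M.J, J := M.K, K := M.I
    I_lin := M.J_lin, J_lin := M.K_lin, K_lin := M.I_lin
    I_sq := M.J_sq, J_sq := M.hermK.sq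
    K_def := fun X => (M.JK X).symm
    anticomm := fun X => by rw [M.JK, M.KJ, neg_neg]
    I_metric := M.J_metric
    J_metric := M.hermK.metric }

/-! contractions -/

section contr
variable {M} {A B : V → V}

theorem sum_g_A (hA : M.Herm A) {ν : V → C} (hν : IsLinearMap C ν) (X : V) :
    ∑ i, ν (M.frame i) * M.g X (A (M.frame i)) = -ν (A X) := by
  rw [← M.lin_eval' hν (A X), ← Finset.sum_neg_distrib]
  refine Finset.sum_congr rfl fun i _ => ?_
  rw [hA.skew]; ring

theorem sum_gAA (hA : M.Herm A) (hB : M.Herm B) (X Y : V) :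
    ∑ j, M.g X (A (M.frame j)) * M.g Y (B (M.frame j)) = M.g (A X) (B Y) := by
  rw [← M.parseval]
  refine Finset.sum_congr rfl fun i _ => ?_
  rw [hA.skew, hB.skew]; ring

theorem contr1 (hA : M.Herm A) (hB : M.Herm B) {μ : V → C} (hμ : IsLinearMap C μ) (X : V) :
    ∑ i, ∑ j, μ (M.frame i) * M.g X (A (M.frame j)) * M.g (M.frame i) (B (M.frame j))
      = -μ (B (A X)) := by
  simp only [mul_assoc, ← Finset.mul_sum]
  rw [← sum_g_A hB hμ]
  refine Finset.sum_congr rfl fun i _ => ?_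
  rw [sum_gAA hA hB]

theorem contr2 (hA : M.Herm A) (hB : M.Herm B) {μ : V → C} (hμ : IsLinearMap C μ) (X : V) :
    ∑ i, ∑ j, μ (M.frame j) * M.g X (A (M.frame i)) * M.g (M.frame i) (B (M.frame j))
      = μ (B (A X)) := by
  rw [Finset.sum_comm, ← neg_neg (μ (B (A X))), ← contr1 hA hB hμ, ← Finset.sum_neg_distrib]
  refine Finset.sum_congr rfl fun i _ => ?_
  rw [← Finset.sum_neg_distrib]
  refine Finset.sum_congr rfl fun j _ => ?_
  rw [M.g_symm (M.frame j), hB.skew]; ring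

theorem contr3 (hB : M.Herm B) {μ : V → C} (hμ : IsLinearMap C μ) (X : V) :
    ∑ i, ∑ j, μ (M.frame j) * M.g X (M.frame i) * M.g (M.frame i) (B (M.frame j))
      = -μ (B X) := by
  rw [Finset.sum_comm, ← sum_g_A hB hμ]
  refine Finset.sum_congr rfl fun i _ => ?_
  simp only [mul_assoc, ← Finset.mul_sum]
  congr 1
  rw [← M.parseval]
  refine Finset.sum_congr rfl fun j _ => ?_
  rw [M.g_symm (M.frame j)]

theorem contr4 (hB : M.Herm B) {μ : V → C} (hμ : IsLinearMap C μ) (X : V) :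
    ∑ i, ∑ j, μ (M.frame i) * M.g X (M.frame j) * M.g (M.frame i) (B (M.frame j))
      = μ (B X) := by
  rw [Finset.sum_comm, ← neg_neg (μ (B X)), ← contr3 hB hμ, ← Finset.sum_neg_distrib]
  refine Finset.sum_congr rfl fun i _ => ?_
  rw [← Finset.sum_neg_distrib]
  refine Finset.sum_congr rfl fun j _ => ?_
  rw [M.g_symm (M.frame j) (B _), hB.skew]; ring

theorem contr_same (hA : M.Herm A) :
    ∑ i, ∑ j, M.g (M.frame i) (A (M.frame j)) * M.g (M.frame i) (A (M.frame j))
      = 4 * (n : C) := by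
  rw [← M.sum_gee]
  refine Finset.sum_congr rfl fun i _ => ?_
  rw [sum_gAA hA hA, hA.metric]

theorem contr_diff (hA : M.Herm A) (hB : M.Herm B) (hAB : ∀ X, M.g X (A (B X)) = 0) :
    ∑ i, ∑ j, M.g (M.frame i) (A (M.frame j)) * M.g (M.frame i) (B (M.frame j)) = 0 := by
  refine Finset.sum_eq_zero fun i _ => ?_
  rw [sum_gAA hA hB, hA.skew, hAB, neg_zero]

end contr
set_option linter.unusedSectionVars false
set_option linter.unusedSimpArgs false

/-- the data of a conformal change of metric -/
structure Conf (M N : AQH n C V) (σ es esInv : C) : Prop where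
  inv : es * esInv = 1
  des : ∀ X, M.D X es = es * M.D X σ
  D : N.D = M.D
  br : N.bracket = M.bracket
  g : ∀ X Y, N.g X Y = es * es * M.g X Y
  I : N.I = M.I
  J : N.J = M.J
  K : N.K = M.K
  frame : ∀ i, N.frame i = esInv • M.frame i

variable {M} {N : AQH n C V} {σ es esInv : C} {A B : V → V}

theorem Conf.rot (h : Conf M N σ es esInv) : Conf M.rot N.rot σ es esInv :=
  ⟨h.inv, h.des, h.D, h.br, h.g, h.J, h.K, h.I, h.frame⟩

theorem Conf.D_mul (h : Conf M N σ es esInv) (X : V) (f : C) :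
    M.D X (es * es * f) = es * es * (M.D X f + 2 * M.D X σ * f) := by
  rw [M.D_mul, M.D_mul, h.des]; ring

theorem Conf.cancel (h : Conf M N σ es esInv) {a b : C} (hab : es * es * a = es * es * b) :
    a = b := by
  linear_combination (esInv * esInv) * hab - (es * esInv + 1) * (a - b) * h.inv

theorem Conf.nab (h : Conf M N σ es esInv) (X Y : V) :
    N.nab X Y = M.nab X Y + M.D X σ • Y + M.D Y σ • X - M.g X Y • M.grad σ := by
  apply M.g_ext
  intro Z
  have met : ∀ X Y Z, M.D X (M.g Y Z) + 2 * M.D X σ * M.g Y Z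
      = M.g (N.nab X Y) Z + M.g Y (N.nab X Z) := by
    intro X Y Z
    have := N.nab_metric X Y Z
    rw [h.D, h.g, h.g, h.g, h.D_mul] at this
    apply h.cancel
    rw [this]; ring
  have tor : ∀ X Y Z, M.g (N.nab X Y) Z - M.g (N.nab Y X) Z
      = M.g (M.nab X Y) Z - M.g (M.nab Y X) Z := by
    intro X Y Z
    rw [← M.g_sub, ← M.g_sub, N.torsion_free, M.torsion_free, h.br]
  have a1 := met X Y Z
  have a2 := met Y Z X
  have a3 := met Z X Y
  have b1 := M.nab_metric X Y Z
  have b2 := M.nab_metric Y Z X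
  have b3 := M.nab_metric Z X Y
  have c1 := tor X Y Z
  have c2 := tor Y Z X
  have c3 := tor Z X Y
  simp only [M.g_sub, M.g_add, M.g_smul, M.g_grad]
  apply half_cancel
  simp only [M.g_symm X (N.nab _ _), M.g_symm Y (N.nab _ _), M.g_symm Z (N.nab _ _),
    M.g_symm X (M.nab _ _), M.g_symm Y (M.nab _ _), M.g_symm Z (M.nab _ _),
    M.g_symm Z X] at *
  linear_combination (-1) * a1 - a2 + a3 + b1 + b2 - b3 + c1 - c2 + c3

variable [Module ℝ V] [IsScalarTower ℝ C V]

theorem nab2_smul1 (ψ : V → V → C) (hψ1 : ∀ Z, IsLinearMap C (fun Y => ψ Y Z))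
    (hψ2 : ∀ Y, IsLinearMap C (ψ Y)) (f : C) (X Y Z : V) :
    M.nab2 ψ (f • X) Y Z = f * M.nab2 ψ X Y Z := by
  have := (hψ1 Z).map_smul
  simp only [nab2, M.D_smulX, M.nab_smulX, (hψ2 _).map_smul, this, smul_eq_mul]; ring

theorem nab2_smul2 (ψ : V → V → C) (hψ1 : ∀ Z, IsLinearMap C (fun Y => ψ Y Z)) (f : C) (X Y Z : V) :
    M.nab2 ψ X (f • Y) Z = f * M.nab2 ψ X Y Z := by
  have h1 := fun Z => (hψ1 Z).map_smul
  have h2 := fun Z => (hψ1 Z).map_add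
  simp only [nab2, M.nab_leibniz, h1, h2, smul_eq_mul, M.D_mul]; ring

theorem nab2_smul3 (ψ : V → V → C)
    (hψ2 : ∀ Y, IsLinearMap C (ψ Y)) (f : C) (X Y Z : V) :
    M.nab2 ψ X Y (f • Z) = f * M.nab2 ψ X Y Z := by
  have h1 := fun Z => (hψ2 Z).map_smul
  have h2 := fun Z => (hψ2 Z).map_add
  simp only [nab2, M.nab_leibniz, h1, h2, smul_eq_mul, M.D_mul]; ring

theorem omega_lin1 (Z : V) : IsLinearMap C (fun Y => M.omega A Y Z) :=
  ⟨fun X Y => M.g_add X Y _, fun f X => M.g_smul f X _⟩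

theorem omega_lin2 (hA : M.Herm A) (Y : V) : IsLinearMap C (M.omega A Y) :=
  hA.comp_lin (M.g_lin Y)

theorem omega_skew (hA : M.Herm A) (X Y : V) : M.omega A Y X = -M.omega A X Y := by
  simp only [omega]; rw [M.g_symm, hA.skew]

theorem Conf.omega (h : Conf M N σ es esInv) (X Y : V) :
    N.omega A X Y = es * es * M.omega A X Y := h.g _ _

theorem Conf.nab2 (h : Conf M N σ es esInv) (hA : M.Herm A) (X Y Z : V) :
    N.nab2 (N.omega A) X Y Z = es * es * (M.nab2 (M.omega A) X Y Z
      - M.D Y σ * M.g X (A Z) + M.g X Y * M.D (A Z) σ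
      + M.D Z σ * M.g X (A Y) - M.g X Z * M.D (A Y) σ) := by
  have e1 : M.g Y (A X) = -M.g X (A Y) := by rw [M.g_symm, hA.skew]
  have e2 : M.g Y (A (M.grad σ)) = -M.D (A Y) σ := by rw [M.g_symm, hA.skew, M.g_grad]
  simp only [AQH.nab2, h.omega, h.D, h.D_mul, h.nab]
  simp only [AQH.omega, hA.add, hA.sub, hA.smul, M.g_add, M.g_add', M.g_sub, M.g_sub', M.g_smul,
    M.g_smul', M.g_grad, e1, e2]
  ring

theorem Conf.codiff (h : Conf M N σ es esInv) (hA : M.Herm A) (X : V) :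
    act1 A (N.codiff2 (N.omega A)) X
      = act1 A (M.codiff2 (M.omega A)) X - (2*(2*(n:ℝ)-1)) • M.D X σ := by
  have key : ∀ i, N.nab2 (N.omega A) (N.frame i) (N.frame i) (A X)
      = M.nab2 (M.omega A) (M.frame i) (M.frame i) (A X)
        + M.D (M.frame i) σ * M.g X (M.frame i)
        - M.g (M.frame i) (M.frame i) * M.D X σ
        + M.D (A (M.frame i)) σ * M.g X (A (M.frame i)) := by
    intro i
    rw [h.nab2 hA, h.frame, hA.smul, nab2_smul1 _ omega_lin1 (omega_lin2 hA),
      nab2_smul2 _ omega_lin1]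
    have e : M.g (M.frame i) (A X) = -M.g X (A (M.frame i)) := by rw [M.g_symm, hA.skew]
    simp only [M.D_smulX, M.g_smul, M.g_smul', hA.diag, hA.sq, M.D_negX, M.g_neg', e,
      M.g_symm (M.frame i) X]
    linear_combination (M.nab2 (M.omega A) (M.frame i) (M.frame i) (A X)
        + M.D (M.frame i) σ * M.g X (M.frame i)
        - M.g (M.frame i) (M.frame i) * M.D X σ
        + M.D (A (M.frame i)) σ * M.g X (A (M.frame i))) * (es * esInv + 1) * h.inv
  have s3 := sum_g_A hA (hA.comp_lin (M.D_lin σ)) X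
  simp only [hA.sq, M.D_negX, neg_neg] at s3
  simp only [act1, codiff2, neg_neg]
  rw [Finset.sum_congr rfl fun i _ => key i]
  simp only [Finset.sum_add_distrib, Finset.sum_sub_distrib, ← Finset.sum_mul, M.sum_gee, s3,
    M.lin_eval' (M.D_lin σ)]
  simp only [Algebra.smul_def, map_mul, map_sub, map_natCast, map_ofNat, map_one]
  ring

theorem Conf.lambdaI (h : Conf M N σ es esInv) (X : V) :
    N.lambdaI X = M.lambdaI X - (1/(n:ℝ)) • M.D (M.I X) σ := by
  have hA := M.hermJ
  have hB := M.hermK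
  have key : ∀ i j, N.nab2 (N.omega M.J) X (N.frame i) (N.frame j)
        * N.omega M.K (N.frame i) (N.frame j)
      = M.nab2 (M.omega M.J) X (M.frame i) (M.frame j) * M.omega M.K (M.frame i) (M.frame j)
        - M.D (M.frame i) σ * M.g X (M.J (M.frame j)) * M.g (M.frame i) (M.K (M.frame j))
        + M.D (M.J (M.frame j)) σ * M.g X (M.frame i) * M.g (M.frame i) (M.K (M.frame j))
        + M.D (M.frame j) σ * M.g X (M.J (M.frame i)) * M.g (M.frame i) (M.K (M.frame j))
        - M.D (M.J (M.frame i)) σ * M.g X (M.frame j) * M.g (M.frame i) (M.K (M.frame j)) := by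
    intro i j
    rw [h.nab2 hA, h.frame, h.frame, nab2_smul2 _ omega_lin1,
      nab2_smul3 _ (omega_lin2 hA), h.omega]
    simp only [hA.smul, hB.smul, AQH.omega, M.D_smulX, M.g_smul, M.g_smul']
    generalize M.nab2 (M.omega M.J) X (M.frame i) (M.frame j) = T
    linear_combination (M.g (M.frame i) (M.K (M.frame j))) * (T
      - M.D (M.frame i) σ * M.g X (M.J (M.frame j))
      + M.g X (M.frame i) * M.D (M.J (M.frame j)) σ
      + M.D (M.frame j) σ * M.g X (M.J (M.frame i))
      - M.g X (M.frame j) * M.D (M.J (M.frame i)) σ) * (es * esInv + 1)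
        * ((es * esInv)^2 + 1) * h.inv
  simp only [AQH.lambdaI, inner2, h.J, h.K, key]
  have s1 := contr1 hA hB (M.D_lin σ) X
  have s2 := contr2 hA hB (M.D_lin σ) X
  have s3 := contr3 hB (hA.comp_lin (M.D_lin σ)) X
  have s4 := contr4 hB (hA.comp_lin (M.D_lin σ)) X
  simp only [M.JK, M.KJ, M.D_negX] at s1 s2 s3 s4
  simp only [Finset.sum_add_distrib, Finset.sum_sub_distrib, s1, s2, s3, s4, smul_add, smul_sub,
    smul_smul, smul_neg]
  algebra

theorem Conf.act_lambdaI (h : Conf M N σ es esInv) (X : V) :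
    act1 N.I N.lambdaI X = act1 M.I M.lambdaI X - (1/(n:ℝ)) • M.D X σ := by
  simp only [act1, h.lambdaI, h.I, M.I_sq, M.D_negX]
  algebra

theorem Conf.d2 (h : Conf M N σ es esInv) (X Y Z : V) :
    N.d2 (N.omega A) X Y Z
      = es * es * ((2:ℝ) • wedge12 (fun W => M.D W σ) (M.omega A) X Y Z
          + M.d2 (M.omega A) X Y Z) := by
  simp only [AQH.d2, h.omega, h.D, h.D_mul, h.br, wedge12]
  algebra

/-- `A (dω_A)` under a conformal change -/
theorem Conf.act_d2 (h : Conf M N σ es esInv) (hA : M.Herm A) (X Y Z : V) :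
    act3 A (N.d2 (N.omega A)) X Y Z
      = es * es * (act3 A (M.d2 (M.omega A)) X Y Z
          + (2:ℝ) • wedge12 (act1 A (fun W => M.D W σ)) (M.omega A) X Y Z) := by
  simp only [act3, h.d2, wedge12, act1, AQH.omega, hA.metric]
  algebra

theorem Conf.betaI (h : Conf M N σ es esInv) (X Y Z : V) :
    N.betaI X Y Z = es * es * (M.betaI X Y Z
          + (2:ℝ) • wedge12 (act1 M.J (fun W => M.D W σ)) (M.omega M.J) X Y Z
          + (2:ℝ) • wedge12 (act1 M.K (fun W => M.D W σ)) (M.omega M.K) X Y Z) := by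
  simp only [AQH.betaI, h.J, h.K, h.act_d2 M.hermJ, h.act_d2 M.hermK]
  ring

theorem d2_smul2 (hA : M.Herm A) (f : C) (X Y Z : V) :
    M.d2 (M.omega A) X (f • Y) Z = f * M.d2 (M.omega A) X Y Z := by
  have hb : M.bracket (f • Y) Z = f • M.bracket Y Z - M.D Z f • Y := by
    rw [M.bracket_skew, M.bracket_smul, M.bracket_skew Z Y, smul_neg]; abel
  have e : M.g Y (A X) = -M.g X (A Y) := by rw [M.g_symm, hA.skew]
  simp only [d2, omega, hb, M.bracket_smul, hA.smul, M.g_smul, M.g_smul', M.g_add, M.g_sub,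
    M.D_smulX, M.D_mul, e]
  ring

theorem d2_smul3 (hA : M.Herm A) (f : C) (X Y Z : V) :
    M.d2 (M.omega A) X Y (f • Z) = f * M.d2 (M.omega A) X Y Z := by
  have e : M.g Z (A X) = -M.g X (A Z) := by rw [M.g_symm, hA.skew]
  have e' : M.g Z (A Y) = -M.g Y (A Z) := by rw [M.g_symm, hA.skew]
  simp only [d2, omega, M.bracket_smul, hA.smul, M.g_smul, M.g_smul', M.g_add,
    M.D_smulX, M.D_mul, e, e']
  ring

theorem betaI_smul (a b : C) (X Y Z : V) :
    M.betaI X (a • Y) (b • Z) = a * b * M.betaI X Y Z := by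
  simp only [betaI, act3, M.hermJ.smul, M.hermK.smul, d2_smul2 M.hermJ, d2_smul2 M.hermK,
    d2_smul3 M.hermJ, d2_smul3 M.hermK]
  ring

theorem wedge_smul (hA : M.Herm A) (a b : C) (X Y Z : V) :
    wedge12 (act1 A (fun W => M.D W σ)) (M.omega A) X (a • Y) (b • Z)
      = a * b * wedge12 (act1 A (fun W => M.D W σ)) (M.omega A) X Y Z := by
  simp only [wedge12, act1, omega, hA.smul, M.g_smul, M.g_smul', M.D_smulX]
  ring

theorem Conf.Lam (h : Conf M N σ es esInv) (hB : M.Herm B) {β T : V → V → V → C}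
    (hβ : ∀ X Y Z, β X Y Z = es * es * T X Y Z)
    (hT : ∀ (a b : C) X Y Z, T X (a • Y) (b • Z) = a * b * T X Y Z) (X : V) :
    N.Lam B β X = M.Lam B T X := by
  simp only [AQH.Lam]
  congr 1
  refine Finset.sum_congr rfl fun i _ => Finset.sum_congr rfl fun j _ => ?_
  simp only [hβ, h.frame, hT, AQH.omega, hB.smul, h.g, M.g_smul, M.g_smul']
  generalize T X (M.frame i) (M.frame j) = t
  linear_combination (M.g (M.frame i) (B (M.frame j))) * t * (es * esInv + 1)
        * ((es * esInv)^2 + 1) * h.inv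

theorem Lam_add (β γ : V → V → V → C) (r : ℝ) (X : V) :
    M.Lam B (fun X Y Z => β X Y Z + r • γ X Y Z) X = M.Lam B β X + r • M.Lam B γ X := by
  simp only [Lam, Finset.smul_sum, ← Finset.sum_add_distrib]
  refine Finset.sum_congr rfl fun i _ => Finset.sum_congr rfl fun j _ => ?_
  algebra

theorem Lam_wedge_aux (hA : M.Herm A) (hB : M.Herm B) (X : V) :
    M.Lam B (wedge12 (act1 A (fun W => M.D W σ)) (M.omega A)) X
      = (1/2:ℝ) • (-M.D (A X) σ * ∑ i, ∑ j, M.g (M.frame i) (A (M.frame j))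
          * M.g (M.frame i) (B (M.frame j))) - M.D (A (B (A X))) σ := by
  have s1 := contr1 hA hB (hA.comp_lin (M.D_lin σ)) X
  have s2 := contr2 hA hB (hA.comp_lin (M.D_lin σ)) X
  have key : ∀ i j, wedge12 (act1 A (fun W => M.D W σ)) (M.omega A) X (M.frame i) (M.frame j)
        * M.omega B (M.frame i) (M.frame j)
      = (-M.D (A X) σ) * (M.g (M.frame i) (A (M.frame j)) * M.g (M.frame i) (B (M.frame j)))
      + M.D (A (M.frame i)) σ * M.g X (A (M.frame j)) * M.g (M.frame i) (B (M.frame j))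
      - M.D (A (M.frame j)) σ * M.g X (A (M.frame i)) * M.g (M.frame i) (B (M.frame j)) := by
    intro i j
    simp only [wedge12, act1, omega]; ring
  simp only [Lam, key, Finset.sum_add_distrib, Finset.sum_sub_distrib, s1, s2, ← Finset.mul_sum]
  algebra

theorem Lam_wedge_same (hA : M.Herm A) (X : V) :
    M.Lam A (wedge12 (act1 A (fun W => M.D W σ)) (M.omega A)) X
      = (-(2*(n:ℝ)-1)) • M.D (A X) σ := by
  rw [Lam_wedge_aux hA hA, contr_same hA, hA.sq, M.D_negX]
  have : (4 * (n:C)) = algebraMap ℝ C (4 * n) := by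
    rw [map_mul, map_ofNat, map_natCast]
  rw [this]
  algebra

theorem Lam_wedge_diff (hA : M.Herm A) (hB : M.Herm B) (hAB : ∀ X, M.g X (A (B X)) = 0)
    (hABA : ∀ X, A (B (A X)) = B X) (X : V) :
    M.Lam B (wedge12 (act1 A (fun W => M.D W σ)) (M.omega A)) X = - M.D (B X) σ := by
  rw [Lam_wedge_aux hA hB, contr_diff hA hB hAB, hABA]
  simp

theorem Conf.Lam_betaI (h : Conf M N σ es esInv) (hB : M.Herm B) (X : V) :
    N.Lam B N.betaI X = M.Lam B M.betaI X
      + (2:ℝ) • M.Lam B (wedge12 (act1 M.J (fun W => M.D W σ)) (M.omega M.J)) X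
      + (2:ℝ) • M.Lam B (wedge12 (act1 M.K (fun W => M.D W σ)) (M.omega M.K)) X := by
  rw [← Lam_add, ← Lam_add]
  apply h.Lam hB h.betaI
  intro a b X Y Z
  simp only [betaI_smul, wedge_smul M.hermJ, wedge_smul M.hermK]
  algebra

theorem Conf.nu4I (h : Conf M N σ es esInv) (X : V) :
    N.nu4I X = M.nu4I X - (4:ℝ) • M.D X σ := by
  simp only [AQH.nu4I, act1, h.I, h.Lam_betaI M.hermI]
  rw [Lam_wedge_diff M.hermJ M.hermI, Lam_wedge_diff M.hermK M.hermI]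
  · simp only [M.I_sq, M.D_negX]; algebra
  · intro X; rw [M.KI, M.hermJ.diag]
  · intro X; rw [M.IK, M.hermK.neg, M.KJ, neg_neg]
  · intro X; rw [M.JI, M.g_neg', M.hermK.diag, neg_zero]
  · intro X; rw [M.IJ, M.JK]

theorem Conf.nu3I (h : Conf M N σ es esInv) (hn : 1 < n) (X : V) :
    N.nu3I X = M.nu3I X - (4:ℝ) • M.D X σ := by
  have hn1 : (n:ℝ) - 1 ≠ 0 := by
    have : (1:ℝ) < n := by exact_mod_cast hn
    linarith
  have hn2 : 2 * (n:ℝ) + 1 ≠ 0 := by positivity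
  have e1 : act1 N.J (N.Lam N.J N.betaI) X
      = act1 M.J (M.Lam M.J M.betaI) X - (4 * (n:ℝ)) • M.D X σ := by
    simp only [act1, h.J, h.Lam_betaI M.hermJ]
    rw [Lam_wedge_same M.hermJ, Lam_wedge_diff M.hermK M.hermJ]
    · simp only [M.J_sq, M.D_negX]; algebra
    · intro X; rw [M.KJ, M.g_neg', M.hermI.diag, neg_zero]
    · intro X; rw [M.JK, M.KI]
  simp only [AQH.nu3I, e1, h.nu4I]
  have e2 : (1/((2*(n:ℝ)+1) * ((n:ℝ)-1))) * ((2*(n:ℝ)-1) * (4 * n) - 4) = 4 := by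
    field_simp; ring
  have e3 : ((1/((2*(n:ℝ)+1) * ((n:ℝ)-1))) * ((2*(n:ℝ)-1) * (4 * n) - 4)) • M.D X σ
      = (4:ℝ) • M.D X σ := by rw [e2]
  linear_combination (norm := algebra) -e3

theorem real_smul_eq (r : ℝ) (X : V) : r • X = (algebraMap ℝ C r) • X :=
  (algebraMap_smul C r X).symm

theorem g_rsmul (r : ℝ) (X Y : V) : M.g (r • X) Y = r • M.g X Y := by
  rw [real_smul_eq (C := C), M.g_smul, Algebra.smul_def]

theorem nabA_smul1 (hA : M.Herm A) (f : C) (X Y : V) :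
    M.nabA A (f • X) Y = f • M.nabA A X Y := by
  simp only [nabA, M.nab_smulX, hA.smul, smul_sub]

theorem nabA_smul2 (hA : M.Herm A) (f : C) (X Y : V) :
    M.nabA A X (f • Y) = f • M.nabA A X Y := by
  simp only [nabA, M.nab_leibniz, hA.smul, hA.add, smul_sub]
  abel

theorem lambdaI_smul (f : C) (X : V) : M.lambdaI (f • X) = f * M.lambdaI X := by
  have : ∀ Y Z, M.nab2 (M.omega M.J) (f • X) Y Z = f * M.nab2 (M.omega M.J) X Y Z :=
    nab2_smul1 _ omega_lin1 (omega_lin2 M.hermJ) f X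
  simp only [lambdaI, inner2, this, mul_assoc, ← Finset.mul_sum]
  algebra

theorem lambdaJ_smul (f : C) (X : V) : M.lambdaJ (f • X) = f * M.lambdaJ X :=
  lambdaI_smul (M := M.rot) f X

theorem lambdaK_smul (f : C) (X : V) : M.lambdaK (f • X) = f * M.lambdaK X :=
  lambdaI_smul (M := M.rot.rot) f X

theorem Conf.lambdaJ (h : Conf M N σ es esInv) (X : V) :
    N.lambdaJ X = M.lambdaJ X - (1/(n:ℝ)) • M.D (M.J X) σ := h.rot.lambdaI X

theorem Conf.lambdaK (h : Conf M N σ es esInv) (X : V) :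
    N.lambdaK X = M.lambdaK X - (1/(n:ℝ)) • M.D (M.K X) σ := h.rot.rot.lambdaI X

theorem g_xi (X Y Z : V) : M.g (M.xi X Y) Z
    = (-(1/4:ℝ)) • (M.g (M.I (M.nabA M.I X Y)) Z + M.g (M.J (M.nabA M.J X Y)) Z
        + M.g (M.K (M.nabA M.K X Y)) Z)
      + (1/2:ℝ) • (M.lambdaI X * M.g (M.I Y) Z + M.lambdaJ X * M.g (M.J Y) Z
        + M.lambdaK X * M.g (M.K Y) Z) := by
  simp only [xi, M.g_add, g_rsmul, M.g_smul]

theorem g_xi_smul (a b : C) (X Y Z : V) :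
    M.g (M.xi (a • X) (b • Y)) Z = a * b * M.g (M.xi X Y) Z := by
  have hI := M.hermI
  have hJ := M.hermJ
  have hK := M.hermK
  simp only [g_xi, nabA_smul1 hI, nabA_smul1 hJ, nabA_smul1 hK, nabA_smul2 hI, nabA_smul2 hJ,
    nabA_smul2 hK, hI.smul, hJ.smul, hK.smul, M.g_smul, lambdaI_smul, lambdaJ_smul, lambdaK_smul]
  algebra

theorem Conf.nabA (h : Conf M N σ es esInv) (hA : M.Herm A) (X Y Z : V) :
    M.g (A (N.nabA A X Y)) Z = M.g (A (M.nabA A X Y)) Z + M.D (A Y) σ * M.g (A X) Z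
      + M.g X (A Y) * M.D (A Z) σ + M.D Y σ * M.g X Z - M.g X Y * M.D Z σ := by
  simp only [AQH.nabA, h.nab, hA.add, hA.sub, hA.smul, hA.sq, M.g_add, M.g_sub, M.g_smul,
    M.g_neg, hA.skew (M.grad σ), M.g_grad]
  ring

/-- the change of the intrinsic torsion -/
theorem Conf.xi (h : Conf M N σ es esInv) (X Y Z : V) :
    M.g (N.xi X Y) Z = M.g (M.xi X Y) Z
      + (-(1/4:ℝ)) • (3 * (M.D Y σ * M.g X Z) - 3 * (M.g X Y * M.D Z σ)
        + (M.D (M.I Y) σ * M.g (M.I X) Z + M.g X (M.I Y) * M.D (M.I Z) σ)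
        + (M.D (M.J Y) σ * M.g (M.J X) Z + M.g X (M.J Y) * M.D (M.J Z) σ)
        + (M.D (M.K Y) σ * M.g (M.K X) Z + M.g X (M.K Y) * M.D (M.K Z) σ))
      + (-(1/(2*(n:ℝ)))) • (M.D (M.I X) σ * M.g (M.I Y) Z + M.D (M.J X) σ * M.g (M.J Y) Z
        + M.D (M.K X) σ * M.g (M.K Y) Z) := by
  rw [g_xi]
  simp only [AQH.xi, M.g_add, g_rsmul, M.g_smul, h.I, h.J, h.K, h.nabA M.hermI, h.nabA M.hermJ,
    h.nabA M.hermK, h.lambdaI, h.lambdaJ, h.lambdaK]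
  algebra

theorem sum00 (X : V) : ∑ i, M.D (M.frame i) σ * M.g X (M.frame i) = M.D X σ :=
  M.lin_eval' (M.D_lin σ) X

theorem sum01 (hA : M.Herm A) (X : V) :
    ∑ i, M.D (M.frame i) σ * M.g X (A (M.frame i)) = -M.D (A X) σ :=
  sum_g_A hA (M.D_lin σ) X

theorem sum10 (hA : M.Herm A) (X : V) :
    ∑ i, M.D (A (M.frame i)) σ * M.g X (M.frame i) = M.D (A X) σ :=
  M.lin_eval' (hA.comp_lin (M.D_lin σ)) X

theorem sum11 (hA : M.Herm A) (hB : M.Herm B) (X : V) :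
    ∑ i, M.D (A (M.frame i)) σ * M.g X (B (M.frame i)) = -M.D (A (B X)) σ :=
  sum_g_A hB (hA.comp_lin (M.D_lin σ)) X

theorem Conf.scale (h : Conf M N σ es esInv) (t : C) :
    es * es * (esInv * esInv * t) = t := by
  linear_combination t * (es * esInv + 1) * h.inv

theorem coef_aux (hn : 1 < n) :
    (n:ℝ) ≠ 0 ∧ (n:ℝ) - 1 ≠ 0 ∧ 2 * (n:ℝ) + 1 ≠ 0 := by
  have : (1:ℝ) < n := by exact_mod_cast hn
  exact ⟨by linarith, by linarith, by positivity⟩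

theorem N_xi_frame (h : Conf M N σ es esInv) (Y Z : V) (i : Fin (4 * n)) :
    es * es * M.g (N.xi (esInv • M.frame i) (esInv • Y)) Z = M.g (N.xi (M.frame i) Y) Z := by
  have e := g_xi_smul (M := N) esInv esInv (M.frame i) Y Z
  rw [h.g, h.g] at e
  have e' := h.scale (M.g (N.xi (M.frame i) Y) Z)
  apply h.cancel
  linear_combination (es * es) * e + (es * es) * e'

theorem Conf.thetaXi (h : Conf M N σ es esInv) (hn : 1 < n) (X : V) :
    N.thetaXi X = M.thetaXi X - (1/4:ℝ) • M.D X σ := by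
  obtain ⟨h0, h1, h2⟩ := coef_aux hn
  have hI := M.hermI
  have hJ := M.hermJ
  have hK := M.hermK
  simp only [AQH.thetaXi, h.frame, h.g, N_xi_frame h]
  simp only [h.xi, hI.diag, hJ.diag, hK.diag, zero_mul, add_zero]
  simp only [M.g_symm (M.frame _) X, M.g_symm (M.I (M.frame _)) X, M.g_symm (M.J (M.frame _)) X,
    M.g_symm (M.K (M.frame _)) X]
  simp only [Finset.sum_add_distrib, Finset.sum_sub_distrib, ← Finset.smul_sum, ← Finset.mul_sum,
    ← Finset.sum_mul, M.sum_gee, sum00, sum11 hI hI, sum11 hJ hJ, sum11 hK hK, hI.sq, hJ.sq,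
    hK.sq, M.D_negX, neg_neg]
  have e4 : (4 * (n:C)) = algebraMap ℝ C (4 * n) := by
    rw [map_mul, map_ofNat, map_natCast]
  rw [e4]
  have e2 : (n:ℝ)/(6*(2*(n:ℝ)+1)*((n:ℝ)-1)) * (-6/4 + 3 * n - 3 * (1/(2*(n:ℝ)))) = 1/4 := by
    field_simp; ring
  have e3 : ((n:ℝ)/(6*(2*(n:ℝ)+1)*((n:ℝ)-1)) * (-6/4 + 3 * n - 3 * (1/(2*(n:ℝ))))) • M.D X σ
      = (1/4:ℝ) • M.D X σ := by rw [e2]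
  generalize (n:ℝ)/(6*(2*(n:ℝ)+1)*((n:ℝ)-1)) = r at *
  linear_combination (norm := algebra) -e3

theorem Conf.thetaXiI (h : Conf M N σ es esInv) (hn : 1 < n) (X : V) :
    N.thetaXiI X = M.thetaXiI X - (1/4:ℝ) • M.D X σ := by
  obtain ⟨h0, h1, h2⟩ := coef_aux hn
  have hI := M.hermI
  have hJ := M.hermJ
  have hK := M.hermK
  simp only [AQH.thetaXiI, h.frame, h.I, h.g, hI.smul, hI.skew, mul_neg, N_xi_frame h]
  simp only [h.xi, hI.diag, hI.sq, M.JI, M.KI, M.g_neg', M.g_neg, M.D_negX, hJ.diag, hK.diag,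
    neg_zero, zero_mul, mul_zero, add_zero, sub_zero]
  simp only [M.g_symm (M.frame _) (M.I X), M.g_symm (M.I (M.frame _)) (M.I X),
    M.g_symm (M.J (M.frame _)) (M.I X), M.g_symm (M.K (M.frame _)) (M.I X)]
  simp only [Finset.sum_add_distrib, Finset.sum_sub_distrib, Finset.sum_neg_distrib, neg_mul,
    mul_neg, neg_neg, ← Finset.smul_sum,
    ← Finset.mul_sum,
    ← Finset.sum_mul, M.sum_gee, sum00, sum10 hI, sum01 hI, sum11 hI hI, sum11 hJ hJ, sum11 hK hK,
    sum11 hI hJ, sum11 hI hK, sum11 hJ hI, sum11 hJ hK, sum11 hK hI, sum11 hK hJ, hI.sq, hJ.sq,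
    hK.sq, M.JI, M.KI, M.IJ, M.IK, M.JK, M.KJ, hI.neg, hJ.neg, hK.neg, M.D_negX]
  have e4 : (4 * (n:C)) = algebraMap ℝ C (4 * n) := by
    rw [map_mul, map_ofNat, map_natCast]
  rw [e4]
  have e2 : (n:ℝ)/(2*(2*(n:ℝ)+1)*((n:ℝ)-1)) * (-2/4 + n - (1/(2*(n:ℝ)))) = 1/4 := by
    field_simp; ring
  have e3 : ((n:ℝ)/(2*(2*(n:ℝ)+1)*((n:ℝ)-1)) * (-2/4 + n - (1/(2*(n:ℝ))))) • M.D X σ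
      = (1/4:ℝ) • M.D X σ := by rw [e2]
  generalize (n:ℝ)/(2*(2*(n:ℝ)+1)*((n:ℝ)-1)) = r at *
  linear_combination (norm := algebra) -e3

theorem xi_rot (X Y : V) : M.rot.xi X Y = M.xi X Y := by
  have e1 : M.rot.xi X Y = (-(1/4 : ℝ)) • (M.J (M.nabA M.J X Y) + M.K (M.nabA M.K X Y)
      + M.I (M.nabA M.I X Y))
    + (1/2 : ℝ) • (M.lambdaJ X • M.J Y + M.lambdaK X • M.K Y + M.lambdaI X • M.I Y) := rfl
  rw [e1, AQH.xi]
  congr 2 <;> abel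

theorem thetaXiJ_rot : M.rot.thetaXiI = M.thetaXiJ := by
  funext X
  simp only [AQH.thetaXiI, AQH.thetaXiJ, xi_rot]
  rfl

theorem thetaXiK_rot : M.rot.rot.thetaXiI = M.thetaXiK := by
  funext X
  simp only [AQH.thetaXiI, AQH.thetaXiK, xi_rot]
  rfl

theorem xiEH3_eq (θ : V → C) (X Y Z : V) : M.xiEH3 θ X Y Z
    = (3:ℝ) • (M.g X Y * θ Z - M.g X Z * θ Y)
      + (M.g (M.I X) Y * θ (M.I Z) - M.g (M.I X) Z * θ (M.I Y))
      + (M.g (M.J X) Y * θ (M.J Z) - M.g (M.J X) Z * θ (M.J Y))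
      + (M.g (M.K X) Y * θ (M.K Z) - M.g (M.K X) Z * θ (M.K Y))
      + (2/(n:ℝ)) • (θ (M.I X) * M.g Y (M.I Z) + θ (M.J X) * M.g Y (M.J Z)
          + θ (M.K X) * M.g Y (M.K Z)) := by
  have p0 : ∀ Y, ∑ i, M.g (M.frame i) X * M.g (M.frame i) Y = M.g X Y := by
    intro Y
    rw [← M.parseval]
    exact Finset.sum_congr rfl fun i _ => by rw [M.g_symm X, M.g_symm Y]
  have p1 : ∀ {A}, M.Herm A → ∀ Y,
      ∑ i, M.g (M.frame i) X * M.g (A (M.frame i)) Y = M.g (A X) Y := by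
    intro A hA Y
    simp only [hA.skew, mul_neg, Finset.sum_neg_distrib, p0]
  simp only [xiEH3, mul_sub, ← mul_assoc, Finset.sum_sub_distrib, ← Finset.sum_mul, p0,
    p1 M.hermI, p1 M.hermJ, p1 M.hermK, act1, omega]
  algebra

theorem Conf.xiEH (h : Conf M N σ es esInv) (hn : 1 < n) (X Y Z : V) :
    N.g Y (N.xi X Z) - N.xiEH3 N.thetaXi X Y Z
      = es * es * (M.g Y (M.xi X Z) - M.xiEH3 M.thetaXi X Y Z) := by
  have r1 : ∀ {A}, M.Herm A → ∀ X Z, M.g X (A Z) = - M.g (A X) Z := by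
    intro A hA X Z; rw [hA.skew, neg_neg]
  rw [N.g_symm, M.g_symm, h.g, h.xi]
  simp only [xiEH3_eq, h.g, h.I, h.J, h.K, h.thetaXi hn]
  simp only [M.g_symm (M.I Z) Y, M.g_symm (M.J Z) Y, M.g_symm (M.K Z) Y, r1 M.hermI, r1 M.hermJ,
    r1 M.hermK]
  algebra

end conf
end AQH

open AQH in
/-- Conformal change of metric `g° = e^{2σ} g` on an almost
quaternion-Hermitian `4n`-manifold.  The conformal factor `e^σ` is modelled by an
invertible function `es` with `D X es = es · D X σ`, and `N` is the almost
quaternion-Hermitian structure with the same `I, J, K`, derivative, bracket, metric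
`g° = es² g` and rescaled orthonormal frame (its field `N.nab` is then the
Levi-Civita connection of `g°`, by the axioms of `AQH`).  The statement lists the
transformation rules of all associated tensors, and that the only component of
the intrinsic torsion that changes is `ξ_{EH}` (i.e. `ξ° - ξ°_{EH} = ξ - ξ_{EH}`
as `(1,2)`-tensors, written via the metrics as `(0,3)`-tensors). -/
theorem statement8 {n : ℕ} {C V : Type*} [CommRing C] [Algebra ℝ C] [AddCommGroup V]
    [Module C V] [Module ℝ V] [IsScalarTower ℝ C V]
    (hn : 1 < n) (M N : AQH n C V)
    (σ es esInv : C)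
    (hinv : es * esInv = 1)
    (hes : ∀ X, M.D X es = es * M.D X σ)
    (hD : N.D = M.D) (hbr : N.bracket = M.bracket)
    (hg : ∀ X Y, N.g X Y = es * es * M.g X Y)
    (hI : N.I = M.I) (hJ : N.J = M.J) (hK : N.K = M.K)
    (hframe : ∀ i, N.frame i = esInv • M.frame i) :
    -- `ω_A° = e^{2σ} ω_A`
    (∀ X Y, N.omega N.I X Y = es * es * M.omega M.I X Y) ∧
    (∀ X Y, N.omega N.J X Y = es * es * M.omega M.J X Y) ∧
    (∀ X Y, N.omega N.K X Y = es * es * M.omega M.K X Y) ∧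
    -- `dω_A° = e^{2σ} (2 dσ ∧ ω_A + dω_A)`
    (∀ X Y Z, N.d2 (N.omega N.I) X Y Z
      = es * es * ((2:ℝ) • wedge12 (fun W => M.D W σ) (M.omega M.I) X Y Z
          + M.d2 (M.omega M.I) X Y Z)) ∧
    (∀ X Y Z, N.d2 (N.omega N.J) X Y Z
      = es * es * ((2:ℝ) • wedge12 (fun W => M.D W σ) (M.omega M.J) X Y Z
          + M.d2 (M.omega M.J) X Y Z)) ∧
    (∀ X Y Z, N.d2 (N.omega N.K) X Y Z
      = es * es * ((2:ℝ) • wedge12 (fun W => M.D W σ) (M.omega M.K) X Y Z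
          + M.d2 (M.omega M.K) X Y Z)) ∧
    -- `A d*°ω_A° = A d*ω_A - 2(2n-1) dσ`
    (∀ X, act1 N.I (N.codiff2 (N.omega N.I)) X
      = act1 M.I (M.codiff2 (M.omega M.I)) X - (2*(2*(n:ℝ)-1)) • M.D X σ) ∧
    (∀ X, act1 N.J (N.codiff2 (N.omega N.J)) X
      = act1 M.J (M.codiff2 (M.omega M.J)) X - (2*(2*(n:ℝ)-1)) • M.D X σ) ∧
    (∀ X, act1 N.K (N.codiff2 (N.omega N.K)) X
      = act1 M.K (M.codiff2 (M.omega M.K)) X - (2*(2*(n:ℝ)-1)) • M.D X σ) ∧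
    -- `A λ_A° = A λ_A - (1/n) dσ`
    (∀ X, act1 N.I N.lambdaI X = act1 M.I M.lambdaI X - (1/(n:ℝ)) • M.D X σ) ∧
    (∀ X, act1 N.J N.lambdaJ X = act1 M.J M.lambdaJ X - (1/(n:ℝ)) • M.D X σ) ∧
    (∀ X, act1 N.K N.lambdaK X = act1 M.K M.lambdaK X - (1/(n:ℝ)) • M.D X σ) ∧
    -- `β_I° = e^{2σ} (β_I + 2 J dσ ∧ ω_J + 2 K dσ ∧ ω_K)`, and cyclically
    (∀ X Y Z, N.betaI X Y Z
      = es * es * (M.betaI X Y Z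
          + (2:ℝ) • wedge12 (act1 M.J (fun W => M.D W σ)) (M.omega M.J) X Y Z
          + (2:ℝ) • wedge12 (act1 M.K (fun W => M.D W σ)) (M.omega M.K) X Y Z)) ∧
    (∀ X Y Z, N.betaJ X Y Z
      = es * es * (M.betaJ X Y Z
          + (2:ℝ) • wedge12 (act1 M.K (fun W => M.D W σ)) (M.omega M.K) X Y Z
          + (2:ℝ) • wedge12 (act1 M.I (fun W => M.D W σ)) (M.omega M.I) X Y Z)) ∧
    (∀ X Y Z, N.betaK X Y Z
      = es * es * (M.betaK X Y Z
          + (2:ℝ) • wedge12 (act1 M.I (fun W => M.D W σ)) (M.omega M.I) X Y Z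
          + (2:ℝ) • wedge12 (act1 M.J (fun W => M.D W σ)) (M.omega M.J) X Y Z)) ∧
    -- `ν^A_3° = ν^A_3 - 4 dσ` and `ν^A_4° = ν^A_4 - 4 dσ`
    (∀ X, N.nu3I X = M.nu3I X - (4:ℝ) • M.D X σ) ∧
    (∀ X, N.nu3J X = M.nu3J X - (4:ℝ) • M.D X σ) ∧
    (∀ X, N.nu3K X = M.nu3K X - (4:ℝ) • M.D X σ) ∧
    (∀ X, N.nu4I X = M.nu4I X - (4:ℝ) • M.D X σ) ∧
    (∀ X, N.nu4J X = M.nu4J X - (4:ℝ) • M.D X σ) ∧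
    (∀ X, N.nu4K X = M.nu4K X - (4:ℝ) • M.D X σ) ∧
    -- `θ^{ξ°} = θ^ξ - (1/4) dσ` and `θ^{ξ°}_A = θ^ξ_A - (1/4) dσ`
    (∀ X, N.thetaXi X = M.thetaXi X - (1/4:ℝ) • M.D X σ) ∧
    (∀ X, N.thetaXiI X = M.thetaXiI X - (1/4:ℝ) • M.D X σ) ∧
    (∀ X, N.thetaXiJ X = M.thetaXiJ X - (1/4:ℝ) • M.D X σ) ∧
    (∀ X, N.thetaXiK X = M.thetaXiK X - (1/4:ℝ) • M.D X σ) ∧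
    -- only the `EH`-component of the intrinsic torsion changes:
    -- `ξ° - ξ°_{EH} = ξ - ξ_{EH}` (as `(0,3)`-tensors w.r.t. the two metrics)
    (∀ X Y Z, N.g Y (N.xi X Z) - N.xiEH3 N.thetaXi X Y Z
      = es * es * (M.g Y (M.xi X Z) - M.xiEH3 M.thetaXi X Y Z)) := by
  have h : Conf M N σ es esInv := ⟨hinv, hes, hD, hbr, hg, hI, hJ, hK, hframe⟩
  have h' := h.rot
  have h'' := h.rot.rot
  refine ⟨?_, ?_, ?_, ?_, ?_, ?_, ?_, ?_, ?_, h.act_lambdaI, h'.act_lambdaI, h''.act_lambdaI,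
    h.betaI, h'.betaI, h''.betaI, h.nu3I hn, h'.nu3I hn, h''.nu3I hn,
    h.nu4I, h'.nu4I, h''.nu4I, h.thetaXi hn, h.thetaXiI hn, ?_, ?_, h.xiEH hn⟩
  · rw [hI]; exact h.omega
  · rw [hJ]; exact h.omega
  · rw [hK]; exact h.omega
  · rw [hI]; exact h.d2
  · rw [hJ]; exact h.d2
  · rw [hK]; exact h.d2
  · rw [hI]; exact h.codiff M.hermI
  · rw [hJ]; exact h.codiff M.hermJ
  · rw [hK]; exact h.codiff M.hermK
  · rw [← thetaXiJ_rot, ← thetaXiJ_rot]; exact h'.thetaXiI hn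
  · rw [← thetaXiK_rot, ← thetaXiK_rot]; exact h''.thetaXiI hn
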